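/- Let p > 1, 0 < q < 1, 1 < r < ∞, α > 0. Suppose x* ∈ ℝ^N is a local minimizer of E(x) = ∑_{i=1}^G ‖x_i‖_p^q + (1/(rα))·∑_{k=1}^M |(Ax − y)_k|^r, and suppose the group i of x* is nonzero. Then q·‖x*_i‖_p^{q−1} ≤ (1/α)·∑_{j : g(j)=i} ∑_{k=1}^M |(Ax* − y)_k|^{r−1}·|A_{k,j}|. -/

import Mathlib

open Finset

/-!
Rescale the nonzero group `i` of `x*`, that is, move along the line `x* + t d` where `d` is `x*`
restricted to that group. The penalty of group `i` is homogeneous of degree `q` and all other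
penalties are constant along this line, so by Euler's identity the total penalty has derivative
`q ‖x*_i‖_p ^ q` at `t = 0`, even if it is not differentiable at `x*`. By stationarity in `t` the
fidelity term has the opposite derivative. Since every coordinate of `d` is at most `‖x*_i‖_p` in
absolute value, the absolute value of that derivative is at most `‖x*_i‖_p` times the right-hand
side, and one factor `‖x*_i‖_p` cancels.
-/

theorem hasLineDerivAt_self_of_homogeneous {E F : Type*} [AddCommGroup E] [Module ℝ E]
    [NormedAddCommGroup F] [NormedSpace ℝ F] {f : E → F} {x : E} {q : ℝ}
    (hf : ∀ c : ℝ, 0 < c → f (c • x) = c ^ q • f x) :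
    HasLineDerivAt ℝ f (q • f x) x x := by
  have hpow : HasDerivAt (fun t : ℝ => (1 + t) ^ q) q 0 := by
    simpa using ((hasDerivAt_id (0 : ℝ)).const_add 1).rpow_const (p := q) (by simp)
  refine (hpow.smul_const (f x)).congr_of_eventuallyEq ?_
  filter_upwards [lt_mem_nhds (show (-1 : ℝ) < 0 by norm_num)] with t ht
  rw [← hf (1 + t) (by linarith), add_smul, one_smul]

section LpNorm

variable {ι : Type*} {s : Finset ι} {x v : ι → ℝ} {p : ℝ}

/-- The `ℓ_p` norm (a quasi-norm for `0 < p < 1`) of the coordinates of `x` indexed by `s`.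
The exponent is real rather than extended, so that no case distinction hides the power sum. -/
noncomputable def lpNormOn (s : Finset ι) (p : ℝ) (x : ι → ℝ) : ℝ :=
  (∑ j ∈ s, |x j| ^ p) ^ (1 / p)

theorem lpNormOn_nonneg : 0 ≤ lpNormOn s p x := by
  unfold lpNormOn
  positivity

theorem lpNormOn_congr (h : Set.EqOn x v s) : lpNormOn s p x = lpNormOn s p v := by
  unfold lpNormOn
  rw [Finset.sum_congr rfl fun j hj => by rw [h hj]]

theorem lpNormOn_smul (hp : p ≠ 0) (c : ℝ) : lpNormOn s p (c • x) = |c| * lpNormOn s p x := by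
  simp only [lpNormOn, Pi.smul_apply, smul_eq_mul, abs_mul,
    Real.mul_rpow (abs_nonneg _) (abs_nonneg _)]
  rw [← Finset.mul_sum, Real.mul_rpow (by positivity) (by positivity), one_div,
    Real.rpow_rpow_inv (abs_nonneg c) hp]

theorem abs_le_lpNormOn (hp : 0 < p) {j : ι} (hj : j ∈ s) : |x j| ≤ lpNormOn s p x := by
  rw [lpNormOn, one_div, Real.le_rpow_inv_iff_of_pos (abs_nonneg _) (by positivity) hp]
  exact Finset.single_le_sum (f := fun j => |x j| ^ p) (fun _ _ => by positivity) hj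

theorem lpNormOn_pos (hp : 0 < p) (hx : ∃ j ∈ s, x j ≠ 0) : 0 < lpNormOn s p x := by
  obtain ⟨j, hj, hxj⟩ := hx
  exact (abs_pos.2 hxj).trans_le (abs_le_lpNormOn hp hj)

theorem abs_sum_mul_le_lpNormOn_mul (hp : 0 < p) (a : ι → ℝ) :
    |∑ j ∈ s, a j * x j| ≤ lpNormOn s p x * ∑ j ∈ s, |a j| := by
  rw [Finset.mul_sum]
  refine (Finset.abs_sum_le_sum_abs _ _).trans (Finset.sum_le_sum fun j hj => ?_)
  rw [abs_mul, mul_comm]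
  exact mul_le_mul_of_nonneg_right (abs_le_lpNormOn hp hj) (abs_nonneg _)

theorem hasLineDerivAt_lpNormOn_rpow_of_eqOn_self (hp : p ≠ 0) (q : ℝ) (hv : Set.EqOn v x s) :
    HasLineDerivAt ℝ (fun z => lpNormOn s p z ^ q) (q * lpNormOn s p x ^ q) x v := by
  have hradial : HasLineDerivAt ℝ (fun z => lpNormOn s p z ^ q) (q * lpNormOn s p x ^ q) x x := by
    refine hasLineDerivAt_self_of_homogeneous fun c hc => ?_
    rw [lpNormOn_smul hp, abs_of_pos hc, Real.mul_rpow hc.le lpNormOn_nonneg, smul_eq_mul]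
  refine HasDerivAt.congr_of_eventuallyEq hradial (.of_forall fun t => congrArg (· ^ q) ?_)
  exact lpNormOn_congr fun j hj => by simp [hv hj]

theorem hasLineDerivAt_lpNormOn_rpow_of_eqOn_zero (q : ℝ) (hv : Set.EqOn v 0 s) :
    HasLineDerivAt ℝ (fun z => lpNormOn s p z ^ q) 0 x v := by
  refine (hasDerivAt_const (0 : ℝ) (lpNormOn s p x ^ q)).congr_of_eventuallyEq
    (.of_forall fun t => congrArg (· ^ q) ?_)
  exact lpNormOn_congr fun j hj => by simp [hv hj]

end LpNorm

section GroupPenalty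

variable {n Γ : Type*} [Fintype n] [DecidableEq Γ]

/-- The coordinates that the group map `g` assigns to group `i`. -/
def groupIndices (g : n → Γ) (i : Γ) : Finset n := {j | g j = i}

@[simp]
theorem mem_groupIndices {g : n → Γ} {i : Γ} {j : n} : j ∈ groupIndices g i ↔ g j = i := by
  simp [groupIndices]

/-- The group sparsity penalty `∑ i, ‖x_i‖_p ^ q`. -/
noncomputable def groupPenalty [Fintype Γ] (g : n → Γ) (p q : ℝ) (x : n → ℝ) : ℝ :=
  ∑ i, lpNormOn (groupIndices g i) p x ^ q

theorem hasLineDerivAt_groupPenalty_indicator [Fintype Γ] (g : n → Γ) {p : ℝ} (hp : p ≠ 0) (q : ℝ)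
    (x : n → ℝ) (i : Γ) :
    HasLineDerivAt ℝ (groupPenalty g p q) (q * lpNormOn (groupIndices g i) p x ^ q) x
      ((groupIndices g i : Set n).indicator x) := by
  have hterm (l : Γ) : HasLineDerivAt ℝ (fun z => lpNormOn (groupIndices g l) p z ^ q)
      (if l = i then q * lpNormOn (groupIndices g i) p x ^ q else 0) x
      ((groupIndices g i : Set n).indicator x) := by
    split_ifs with hl
    · subst hl
      exact hasLineDerivAt_lpNormOn_rpow_of_eqOn_self hp q Set.eqOn_indicator
    · refine hasLineDerivAt_lpNormOn_rpow_of_eqOn_zero q fun j hj => Set.indicator_of_notMem ?_ x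
      simpa [mem_groupIndices.1 hj] using hl
  simpa using! HasDerivAt.fun_sum fun l (_ : l ∈ univ) => hterm l

end GroupPenalty

section Fidelity

open Matrix

variable {m n : Type*} [Fintype n] (A : Matrix m n ℝ) (y : m → ℝ)

theorem abs_abs_rpow_sub_two_mul_self {r : ℝ} (hr : r ≠ 1) (a : ℝ) :
    |(|a| ^ (r - 2) * a)| = |a| ^ (r - 1) := by
  rcases eq_or_ne a 0 with rfl | ha
  · simp [Real.zero_rpow (sub_ne_zero.2 hr)]
  · rw [abs_mul, abs_of_nonneg (by positivity), ← Real.rpow_add_one (abs_ne_zero.2 ha)]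
    ring_nf

theorem mulVec_indicator_apply (s : Finset n) (x : n → ℝ) (k : m) :
    (A *ᵥ (s : Set n).indicator x) k = ∑ j ∈ s, A k j * x j := by
  classical
  simp [mulVec, dotProduct, Set.indicator_apply, Finset.sum_ite_mem]

variable [Fintype m]

/-- The data fidelity `∑ k, |(A x - y)_k| ^ r`, without its weight `1 / (r α)`. -/
noncomputable def powerFidelity (r : ℝ) (x : n → ℝ) : ℝ := ∑ k, |(A *ᵥ x - y) k| ^ r

/-- The derivative of `powerFidelity A y r` at `x` in direction `v`, divided by `r`. -/
noncomputable def powerFidelitySlope (r : ℝ) (x v : n → ℝ) : ℝ :=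
  ∑ k, |(A *ᵥ x - y) k| ^ (r - 2) * (A *ᵥ x - y) k * (A *ᵥ v) k

theorem hasLineDerivAt_powerFidelity {r : ℝ} (hr : 1 < r) (x v : n → ℝ) :
    HasLineDerivAt ℝ (powerFidelity A y r) (r * powerFidelitySlope A y r x v) x v := by
  have hresidual (k : m) :
      HasDerivAt (fun t : ℝ => (A *ᵥ (x + t • v) - y) k) ((A *ᵥ v) k) 0 := by
    have haffine := ((hasDerivAt_id (0 : ℝ)).mul_const ((A *ᵥ v) k)).const_add ((A *ᵥ x - y) k)
    simpa [mulVec_add, mulVec_smul, sub_add_eq_add_sub] using! haffine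
  have hterm (k : m) : HasDerivAt (fun t : ℝ => |(A *ᵥ (x + t • v) - y) k| ^ r)
      (r * |(A *ᵥ x - y) k| ^ (r - 2) * (A *ᵥ x - y) k * (A *ᵥ v) k) 0 := by
    simpa using! (hasDerivAt_abs_rpow _ hr).comp (0 : ℝ) (hresidual k)
  simpa only [powerFidelitySlope, Finset.mul_sum, mul_assoc] using!
    HasDerivAt.fun_sum fun k (_ : k ∈ univ) => hterm k

theorem abs_powerFidelitySlope_indicator_le {p r : ℝ} (hp : 0 < p) (hr : r ≠ 1)
    (s : Finset n) (x : n → ℝ) :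
    |powerFidelitySlope A y r x ((s : Set n).indicator x)|
      ≤ lpNormOn s p x * ∑ j ∈ s, ∑ k, |(A *ᵥ x - y) k| ^ (r - 1) * |A k j| := by
  rw [Finset.sum_comm, Finset.mul_sum]
  refine (Finset.abs_sum_le_sum_abs _ _).trans (Finset.sum_le_sum fun k _ => ?_)
  rw [abs_mul, abs_abs_rpow_sub_two_mul_self hr, mulVec_indicator_apply, ← Finset.mul_sum,
    mul_left_comm]
  exact mul_le_mul_of_nonneg_left (abs_sum_mul_le_lpNormOn_mul hp (A k)) (by positivity)

end Fidelity

section Minimizer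

open Matrix

variable {m n Γ : Type*} [Fintype m] [Fintype n] [Fintype Γ] [DecidableEq Γ]
  {g : n → Γ} {p q r α : ℝ} {A : Matrix m n ℝ} {y : m → ℝ} {x : n → ℝ}

/-- The group `ℓ_{p,q}`-`ℓ_r` objective `E`. -/
noncomputable def groupObjective (g : n → Γ) (p q r α : ℝ) (A : Matrix m n ℝ) (y : m → ℝ)
    (x : n → ℝ) : ℝ :=
  groupPenalty g p q x + (1 / (r * α)) * powerFidelity A y r x

theorem mul_lpNormOn_rpow_eq_neg_slope_of_isLocalMin (hp : p ≠ 0) (hr : 1 < r)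
    (hmin : IsLocalMin (groupObjective g p q r α A y) x) (i : Γ) :
    q * lpNormOn (groupIndices g i) p x ^ q =
      (1 / α) * -powerFidelitySlope A y r x ((groupIndices g i : Set n).indicator x) := by
  set d := (groupIndices g i : Set n).indicator x
  have hderiv : HasLineDerivAt ℝ (groupObjective g p q r α A y)
      (q * lpNormOn (groupIndices g i) p x ^ q
        + 1 / (r * α) * (r * powerFidelitySlope A y r x d)) x d :=
    HasDerivAt.add (hasLineDerivAt_groupPenalty_indicator g hp q x i)
      (HasDerivAt.const_mul _ (hasLineDerivAt_powerFidelity A y hr x d))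
  have hzero := hmin.hasLineDerivAt_eq_zero hderiv
  have hweight : 1 / (r * α) * r = 1 / α := by field_simp
  rw [← mul_assoc, hweight] at hzero
  linarith

theorem stmt_8_general (hp : 0 < p) (hr : 1 < r) (hα : 0 < α)
    (hmin : IsLocalMin (groupObjective g p q r α A y) x) {i : Γ} (hx : ∃ j, g j = i ∧ x j ≠ 0) :
    q * lpNormOn (groupIndices g i) p x ^ (q - 1)
      ≤ (1 / α) * ∑ j ∈ groupIndices g i, ∑ k, |(A *ᵥ x - y) k| ^ (r - 1) * |A k j| := by
  have hpos : 0 < lpNormOn (groupIndices g i) p x := lpNormOn_pos hp (by simpa using hx)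
  refine le_of_mul_le_mul_left ?_ hpos
  calc lpNormOn (groupIndices g i) p x * (q * lpNormOn (groupIndices g i) p x ^ (q - 1))
      = q * lpNormOn (groupIndices g i) p x ^ q := by
        rw [Real.rpow_sub_one hpos.ne']
        field_simp
    _ = (1 / α) * -powerFidelitySlope A y r x ((groupIndices g i : Set n).indicator x) :=
        mul_lpNormOn_rpow_eq_neg_slope_of_isLocalMin hp.ne' hr hmin i
    _ ≤ (1 / α) * (lpNormOn (groupIndices g i) p x *
          ∑ j ∈ groupIndices g i, ∑ k, |(A *ᵥ x - y) k| ^ (r - 1) * |A k j|) :=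
        mul_le_mul_of_nonneg_left ((neg_le_abs _).trans
          (abs_powerFidelitySlope_indicator_le A y hp hr.ne' _ x)) (by positivity)
    _ = _ := mul_left_comm _ _ _

end Minimizer

/-- Lower-bound inequality at a local minimizer of the group `ℓ_{p,q}`-`ℓ_r` objective:
for a nonzero group `i`, `q‖x*_i‖_p^(q−1)` is bounded by the (scaled) sum of the
fidelity subgradient magnitudes over the coordinates of group `i`. -/
theorem stmt_8 (N M G : ℕ) (g : Fin N → Fin G) (p q r α : ℝ)
    (hp : 1 < p) (hq0 : 0 < q) (hq1 : q < 1) (hr : 1 < r) (hα : 0 < α)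
    (A : Matrix (Fin M) (Fin N) ℝ) (y : Fin M → ℝ) (xstar : Fin N → ℝ)
    (hmin : IsLocalMin (fun x : Fin N → ℝ =>
        (∑ i : Fin G, ((∑ j ∈ univ.filter fun j => g j = i, |x j| ^ p) ^ (1 / p)) ^ q)
          + (1 / (r * α)) * ∑ k, |(A.mulVec x - y) k| ^ r) xstar)
    (i : Fin G) (hne : ∃ j, g j = i ∧ xstar j ≠ 0) :
    q * ((∑ j ∈ univ.filter fun j => g j = i, |xstar j| ^ p) ^ (1 / p)) ^ (q - 1)
      ≤ (1 / α) * ∑ j ∈ univ.filter (fun j => g j = i),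
          ∑ k, |(A.mulVec xstar - y) k| ^ (r - 1) * |A k j| :=
  stmt_8_general (zero_lt_one.trans hp) hr hα hmin hne
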